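/- Let p > 3 and h ∈ (1, p−1). For every c > 0 there exists L₀ ≥ 1 such that for all L ≥ L₀ and all m ≥ 1: ∫_{m−1}^{m} ∫_{−β}^{β} (L + β − α)^{1−p} ⟨α⟩^{−h} (m−β)^{−1/2} dα dβ ≤ c ⟨m⟩^{−h}. -/

import Mathlib

open MeasureTheory intervalIntegral

/-- The Japanese bracket `⟨x⟩ = (1 + x²)^{1/2}`. -/
noncomputable def jap (x : ℝ) : ℝ := Real.sqrt (1 + x ^ 2)

/-!
Fix `q` with `max 1 h < q < p - 1`, and put `x = L + β - α`. Since `|α| ≤ m`, we have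
`⟨α⟩^{-h} ≤ ⟨m⟩^{q-h} ⟨α⟩^{-q}`. For `L ≥ 2` and `m - 1 ≤ β` also `⟨m⟩ ≤ x + ⟨α⟩`, so by convexity
`⟨m⟩^q ≤ 2^{q-1} (x^q + ⟨α⟩^q)`, which extracts the decay in `m` from the kernel:
`x^{1-p} ⟨α⟩^{-h} ≤ 2^{q-1} ⟨m⟩^{-h} (x^{1-p+q} ⟨α⟩^{-q} + x^{1-p})`.
Because `x ≥ L`, the `α`-integral of the last factor is at most a multiple of
`L^{1-p+q} + L^{2-p}`, which tends to `0` as `L → ∞`, while the weight `(m - β)^s` has integral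
`1 / (s + 1)` over `[m - 1, m]`.
-/

open Filter Set Topology

lemma jap_pos (x : ℝ) : 0 < jap x := Real.sqrt_pos.2 (by positivity)

lemma abs_le_jap (x : ℝ) : |x| ≤ jap x := Real.abs_le_sqrt (by linarith)

lemma jap_le_one_add_abs (x : ℝ) : jap x ≤ 1 + |x| :=
  Real.sqrt_le_iff.2 ⟨by positivity, by nlinarith [sq_abs x, abs_nonneg x]⟩

lemma jap_le_jap {x y : ℝ} (hxy : |x| ≤ |y|) : jap x ≤ jap y :=
  Real.sqrt_le_sqrt (by linarith [sq_le_sq.2 hxy])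

lemma jap_rpow_neg_nonneg (q x : ℝ) : 0 ≤ jap x ^ (-q) := Real.rpow_nonneg (jap_pos x).le _

lemma integrable_jap_rpow_neg {q : ℝ} (hq : 1 < q) : Integrable fun x : ℝ => jap x ^ (-q) := by
  have h_int : Integrable fun x : ℝ => (1 + ‖x‖ ^ 2) ^ (-q / 2) :=
    integrable_rpow_neg_one_add_norm_sq (by simpa using hq)
  refine h_int.congr (.of_forall fun x => ?_)
  simp only [jap, Real.norm_eq_abs, sq_abs]
  rw [Real.sqrt_eq_rpow, ← Real.rpow_mul (by positivity)]
  congr 1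
  ring

lemma jap_rpow_neg_le {h q x y : ℝ} (hhq : h ≤ q) (hxy : |x| ≤ |y|) :
    jap x ^ (-h) ≤ jap y ^ (q - h) * jap x ^ (-q) :=
  calc jap x ^ (-h) = jap x ^ (q - h) * jap x ^ (-q) := by
        rw [← Real.rpow_add (jap_pos x)]
        congr 1
        ring
    _ ≤ jap y ^ (q - h) * jap x ^ (-q) := by
        have h_mono : jap x ^ (q - h) ≤ jap y ^ (q - h) :=
          Real.rpow_le_rpow (jap_pos x).le (jap_le_jap hxy) (sub_nonneg.2 hhq)
        exact mul_le_mul_of_nonneg_right h_mono (jap_rpow_neg_nonneg q x)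

lemma add_rpow_le_mul_rpow_add_rpow {q x y : ℝ} (hq : 1 ≤ q) (hx : 0 ≤ x) (hy : 0 ≤ y) :
    (x + y) ^ q ≤ 2 ^ (q - 1) * (x ^ q + y ^ q) := by
  lift x to NNReal using hx
  lift y to NNReal using hy
  exact_mod_cast NNReal.rpow_add_le_mul_rpow_add_rpow x y hq

lemma rpow_mul_rpow_neg_le_of_le_add {q r x y z : ℝ} (hq : 1 ≤ q) (hx : 0 < x) (hy : 0 < y)
    (hz : 0 < z) (hzxy : z ≤ x + y) :
    x ^ r * y ^ (-q) ≤ 2 ^ (q - 1) * z ^ (-q) * (x ^ (r + q) * y ^ (-q) + x ^ r) := by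
  have h_pow : z ^ q ≤ 2 ^ (q - 1) * (x ^ q + y ^ q) :=
    (Real.rpow_le_rpow hz.le hzxy (by linarith)).trans
      (add_rpow_le_mul_rpow_add_rpow hq hx.le hy.le)
  calc x ^ r * y ^ (-q) = x ^ r * y ^ (-q) * z ^ (-q) * z ^ q := by
        rw [mul_assoc _ (z ^ (-q)), ← Real.rpow_add hz, neg_add_cancel, Real.rpow_zero, mul_one]
    _ ≤ x ^ r * y ^ (-q) * z ^ (-q) * (2 ^ (q - 1) * (x ^ q + y ^ q)) := by gcongr
    _ = 2 ^ (q - 1) * z ^ (-q) * (x ^ r * x ^ q * y ^ (-q) + x ^ r * (y ^ (-q) * y ^ q)) := by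
        ring
    _ = 2 ^ (q - 1) * z ^ (-q) * (x ^ (r + q) * y ^ (-q) + x ^ r) := by
        rw [← Real.rpow_add hx, ← Real.rpow_add hy, neg_add_cancel, Real.rpow_zero, mul_one]

lemma intervalIntegrable_sub_rpow {s : ℝ} (hs : -1 < s) (a b c : ℝ) :
    IntervalIntegrable (fun x => (c - x) ^ s) volume a b := by
  simpa using (intervalIntegrable_rpow' (a := c - a) (b := c - b) hs).comp_sub_left c

lemma integral_sub_rpow {a b s : ℝ} (hs : -1 < s) :
    ∫ x in a..b, (b - x) ^ s = (b - a) ^ (s + 1) / (s + 1) := by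
  rw [integral_comp_sub_left (fun x => x ^ s), sub_self, integral_rpow (.inl hs),
    Real.zero_rpow (by linarith), sub_zero]

lemma abs_integral_mul_sub_rpow_le {F : ℝ → ℝ} {a b s M : ℝ} (hab : a ≤ b) (hs : -1 < s)
    (hF : ∀ x ∈ Ioc a b, |F x| ≤ M) :
    |∫ x in a..b, F x * (b - x) ^ s| ≤ M * ((b - a) ^ (s + 1) / (s + 1)) := by
  rw [← Real.norm_eq_abs, ← integral_sub_rpow hs, ← intervalIntegral.integral_const_mul]
  refine norm_integral_le_of_norm_le hab (.of_forall fun x hx => ?_)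
    ((intervalIntegrable_sub_rpow hs a b b).const_mul M)
  have h_weight : 0 ≤ (b - x) ^ s := Real.rpow_nonneg (sub_nonneg.2 hx.2) s
  rw [norm_mul, Real.norm_of_nonneg h_weight]
  exact mul_le_mul_of_nonneg_right (hF x hx) h_weight

lemma intervalIntegrable_add_sub_rpow {a b c : ℝ} (hab : a ≤ b) (hc : 0 < c) (r : ℝ) :
    IntervalIntegrable (fun x => (c + b - x) ^ r) volume a b := by
  refine ContinuousOn.intervalIntegrable_of_Icc hab
    (ContinuousOn.rpow_const (by fun_prop) fun x hx => .inl ?_)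
  linarith [hx.2]

lemma integral_add_sub_rpow_le {a b c p : ℝ} (hab : a ≤ b) (hc : 0 < c) (hp : 2 < p) :
    ∫ x in a..b, (c + b - x) ^ (1 - p) ≤ c ^ (2 - p) / (p - 2) := by
  have h_decay : 1 - p < -1 := by linarith
  calc ∫ x in a..b, (c + b - x) ^ (1 - p) = ∫ u in Ioc c (c + b - a), u ^ (1 - p) := by
        rw [integral_comp_sub_left (fun u => u ^ (1 - p)), add_sub_cancel_right,
          integral_of_le (by linarith)]
    _ ≤ ∫ u in Ioi c, u ^ (1 - p) :=
        setIntegral_mono_set (integrableOn_Ioi_rpow_of_lt h_decay hc)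
          ((ae_restrict_mem measurableSet_Ioi).mono fun u hu =>
            Real.rpow_nonneg (hc.trans hu).le _)
          Ioc_subset_Ioi_self.eventuallyLE
    _ = c ^ (2 - p) / (p - 2) := by
        rw [integral_Ioi_rpow_of_lt h_decay hc, ← neg_div_neg_eq, neg_neg]
        ring_nf

lemma jap_le_add_jap {L m α β : ℝ} (hL : 2 ≤ L) (hm : 0 ≤ m) (hβ : m - 1 ≤ β) :
    jap m ≤ L + β - α + jap α := by
  have h_jap : jap m ≤ 1 + m := by simpa only [abs_of_nonneg hm] using jap_le_one_add_abs m
  linarith [abs_le_jap α, le_abs_self α]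

lemma interior_kernel_le {p q h L m α β : ℝ} (hq : 1 ≤ q) (hqp : q ≤ p - 1) (hhq : h ≤ q)
    (hL : 2 ≤ L) (hβ : m - 1 ≤ β) (hβm : β ≤ m) (hα : |α| ≤ β) :
    (L + β - α) ^ (1 - p) * jap α ^ (-h) ≤ 2 ^ (q - 1) * jap m ^ (-h) *
      (L ^ (1 - p + q) * jap α ^ (-q) + (L + β - α) ^ (1 - p)) := by
  have hm : 0 ≤ m := (abs_nonneg α).trans (hα.trans hβm)
  have hαm : |α| ≤ |m| := (hα.trans hβm).trans (le_abs_self m)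
  have hLx : L ≤ L + β - α := by linarith [le_abs_self α]
  have hx : 0 < L + β - α := by linarith
  have h_split : jap m ^ (-h) = jap m ^ (q - h) * jap m ^ (-q) := by
    rw [← Real.rpow_add (jap_pos m)]
    congr 1
    ring
  set x := L + β - α
  have h_weight : 0 ≤ jap m ^ (q - h) := Real.rpow_nonneg (jap_pos m).le _
  calc x ^ (1 - p) * jap α ^ (-h)
      ≤ x ^ (1 - p) * (jap m ^ (q - h) * jap α ^ (-q)) := by
        gcongr
        exact jap_rpow_neg_le hhq hαm
    _ = jap m ^ (q - h) * (x ^ (1 - p) * jap α ^ (-q)) := by ring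
    _ ≤ jap m ^ (q - h) * (2 ^ (q - 1) * jap m ^ (-q) *
          (x ^ (1 - p + q) * jap α ^ (-q) + x ^ (1 - p))) := by
        refine mul_le_mul_of_nonneg_left ?_ h_weight
        exact rpow_mul_rpow_neg_le_of_le_add hq hx (jap_pos α) (jap_pos m)
          (jap_le_add_jap hL hm hβ)
    _ = 2 ^ (q - 1) * jap m ^ (-h) * (x ^ (1 - p + q) * jap α ^ (-q) + x ^ (1 - p)) := by
        rw [h_split]
        ring
    _ ≤ 2 ^ (q - 1) * jap m ^ (-h) * (L ^ (1 - p + q) * jap α ^ (-q) + x ^ (1 - p)) := by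
        have h_pow : x ^ (1 - p + q) ≤ L ^ (1 - p + q) :=
          Real.rpow_le_rpow_of_nonpos (by linarith) hLx (by linarith)
        gcongr
        exacts [mul_nonneg (by positivity) (jap_rpow_neg_nonneg h m), jap_rpow_neg_nonneg q α]

/-- The constant in the bound of the `α`-integral by a multiple of `⟨m⟩^{-h}`, where `q` is an
auxiliary exponent between `max 1 h` and `p - 1`. -/
noncomputable def interiorConst (p q L : ℝ) : ℝ :=
  2 ^ (q - 1) * (L ^ (1 - p + q) * (∫ α, jap α ^ (-q)) + L ^ (2 - p) / (p - 2))

lemma tendsto_interiorConst {p q : ℝ} (hp : 2 < p) (hqp : q < p - 1) :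
    Tendsto (interiorConst p q) atTop (𝓝 0) := by
  have h_near : Tendsto (fun L : ℝ => L ^ (1 - p + q)) atTop (𝓝 0) := by
    rw [show 1 - p + q = -(p - 1 - q) by ring]
    exact tendsto_rpow_neg_atTop (sub_pos.2 hqp)
  have h_far : Tendsto (fun L : ℝ => L ^ (2 - p)) atTop (𝓝 0) := by
    simpa only [neg_sub] using tendsto_rpow_neg_atTop (sub_pos.2 hp)
  unfold interiorConst
  simpa only [zero_mul, zero_div, add_zero, mul_zero] using
    ((h_near.mul_const (∫ α, jap α ^ (-q))).add (h_far.div_const (p - 2))).const_mul (2 ^ (q - 1))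

lemma abs_integral_interior_kernel_le {p q h L m β : ℝ} (hp : 2 < p) (hq : 1 < q)
    (hqp : q ≤ p - 1) (hhq : h ≤ q) (hL : 2 ≤ L) (hβ₀ : 0 ≤ β) (hβ : m - 1 ≤ β) (hβm : β ≤ m) :
    |∫ α in (-β)..β, (L + β - α) ^ (1 - p) * jap α ^ (-h)| ≤
      interiorConst p q L * jap m ^ (-h) := by
  have hL₀ : 0 < L := by linarith
  have hββ : -β ≤ β := by linarith
  have h_near_int : IntervalIntegrable (fun α => L ^ (1 - p + q) * jap α ^ (-q)) volume (-β) β :=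
    (integrable_jap_rpow_neg hq).intervalIntegrable.const_mul _
  have h_far_int : IntervalIntegrable (fun α => (L + β - α) ^ (1 - p)) volume (-β) β :=
    intervalIntegrable_add_sub_rpow hββ hL₀ _
  have h_near : ∫ α in (-β)..β, jap α ^ (-q) ≤ ∫ α, jap α ^ (-q) := by
    rw [integral_of_le hββ]
    exact setIntegral_le_integral (integrable_jap_rpow_neg hq)
      (.of_forall (jap_rpow_neg_nonneg q))
  have h_weight := jap_rpow_neg_nonneg h m
  calc |∫ α in (-β)..β, (L + β - α) ^ (1 - p) * jap α ^ (-h)|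
      ≤ ∫ α in (-β)..β, 2 ^ (q - 1) * jap m ^ (-h) *
          (L ^ (1 - p + q) * jap α ^ (-q) + (L + β - α) ^ (1 - p)) := by
        rw [← Real.norm_eq_abs]
        refine norm_integral_le_of_norm_le hββ (.of_forall fun α hα => ?_)
          ((h_near_int.add h_far_int).const_mul _)
        have h_nonneg : 0 ≤ (L + β - α) ^ (1 - p) * jap α ^ (-h) :=
          mul_nonneg (Real.rpow_nonneg (by linarith [hα.2]) _) (jap_rpow_neg_nonneg h α)
        rw [Real.norm_of_nonneg h_nonneg]
        exact interior_kernel_le hq.le hqp hhq hL hβ hβm (abs_le.2 ⟨hα.1.le, hα.2⟩)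
    _ = 2 ^ (q - 1) * jap m ^ (-h) * (L ^ (1 - p + q) * (∫ α in (-β)..β, jap α ^ (-q)) +
          ∫ α in (-β)..β, (L + β - α) ^ (1 - p)) := by
        rw [intervalIntegral.integral_const_mul,
          intervalIntegral.integral_add h_near_int h_far_int, intervalIntegral.integral_const_mul]
    _ ≤ 2 ^ (q - 1) * jap m ^ (-h) *
          (L ^ (1 - p + q) * (∫ α, jap α ^ (-q)) + L ^ (2 - p) / (p - 2)) := by
        gcongr
        exact integral_add_sub_rpow_le hββ hL₀ hp
    _ = interiorConst p q L * jap m ^ (-h) := by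
        rw [interiorConst]
        ring

lemma integral_interior_le {p q h s L m : ℝ} (hp : 2 < p) (hq : 1 < q) (hqp : q ≤ p - 1)
    (hhq : h ≤ q) (hs : -1 < s) (hL : 2 ≤ L) (hm : 1 ≤ m) :
    (∫ β in (m - 1)..m, ∫ α in (-β)..β,
      (L + β - α) ^ (1 - p) * jap α ^ (-h) * (m - β) ^ s)
    ≤ interiorConst p q L / (s + 1) * jap m ^ (-h) := by
  simp only [intervalIntegral.integral_mul_const]
  calc _ ≤ interiorConst p q L * jap m ^ (-h) * ((m - (m - 1)) ^ (s + 1) / (s + 1)) :=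
        (le_abs_self _).trans <| abs_integral_mul_sub_rpow_le (by linarith) hs fun β hβ =>
          abs_integral_interior_kernel_le hp hq hqp hhq hL (by linarith [hβ.1]) hβ.1.le hβ.2
    _ = interiorConst p q L / (s + 1) * jap m ^ (-h) := by
        rw [sub_sub_cancel, Real.one_rpow]
        ring

theorem interior_region_estimate_two_general (p h s : ℝ) (hp : 2 < p) (hhp : h < p - 1)
    (hs : -1 < s) :
    ∀ c : ℝ, 0 < c → ∃ L₀ : ℝ, 1 ≤ L₀ ∧ ∀ L : ℝ, L₀ ≤ L → ∀ m : ℝ, 1 ≤ m →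
      (∫ β in (m - 1)..m, ∫ α in (-β)..β,
        (L + β - α) ^ (1 - p) * jap α ^ (-h) * (m - β) ^ s)
      ≤ c * jap m ^ (-h) := by
  intro c hc
  obtain ⟨q, hq, hqp⟩ := exists_between (max_lt (by linarith : 1 < p - 1) hhp)
  obtain ⟨hq₁, hhq⟩ := max_lt_iff.1 hq
  have h_small : ∀ᶠ L in atTop, interiorConst p q L / (s + 1) < c :=
    ((tendsto_interiorConst hp hqp).div_const (s + 1)).eventually_lt_const (by simpa using hc)
  obtain ⟨L₁, hL₁⟩ := eventually_atTop.1 h_small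
  refine ⟨max 2 L₁, one_le_two.trans (le_max_left 2 L₁), fun L hL m hm => ?_⟩
  obtain ⟨hL₂, hL⟩ := max_le_iff.1 hL
  exact (integral_interior_le hp hq₁ hqp.le hhq.le hs hL₂ hm).trans
    (mul_le_mul_of_nonneg_right (hL₁ L hL).le (jap_rpow_neg_nonneg h m))

theorem interior_region_estimate_two (p h : ℝ) (hp : 3 < p) (hh1 : 1 < h) (hh2 : h < p - 1) :
    ∀ c : ℝ, 0 < c → ∃ L₀ : ℝ, 1 ≤ L₀ ∧ ∀ L : ℝ, L₀ ≤ L → ∀ m : ℝ, 1 ≤ m →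
      (∫ β in (m - 1)..m, ∫ α in (-β)..β,
        (L + β - α) ^ (1 - p) * jap α ^ (-h) * (m - β) ^ (-(1 / 2) : ℝ))
      ≤ c * jap m ^ (-h) :=
  interior_region_estimate_two_general p h (-(1 / 2)) (by linarith) hh2 (by norm_num)
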